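/- Let R = K[x₁,...,xₙ,y₁,...,yₙ] and f_{ij} = x_i y_j − x_j y_i. The ideal (y₁, ..., y_k) is a minimal prime of the ideal I = (y₁, f_{12}, ..., f_{k-1,k}). -/

import Mathlib

open MvPolynomial

/-- The variable `xᵢ` of `R = K[x₁,...,xₙ,y₁,...,yₙ]`. -/
noncomputable def xx {K : Type*} [Field K] {n : ℕ} (i : Fin n) :
    MvPolynomial (Fin n ⊕ Fin n) K := X (Sum.inl i)

/-- The variable `yᵢ` of `R = K[x₁,...,xₙ,y₁,...,yₙ]`. -/
noncomputable def yy {K : Type*} [Field K] {n : ℕ} (i : Fin n) :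
    MvPolynomial (Fin n ⊕ Fin n) K := X (Sum.inr i)

/-- The `2×2` minor `f_{ij} = xᵢyⱼ - xⱼyᵢ` of the generic `2×n` matrix. -/
noncomputable def fm {K : Type*} [Field K] {n : ℕ} (i j : Fin n) :
    MvPolynomial (Fin n ⊕ Fin n) K := xx i * yy j - xx j * yy i

/-- The substitution sending `yᵢ` to zero for `i < k`. -/
noncomputable def killY (K : Type*) [Field K] (n k : ℕ) :
    MvPolynomial (Fin n ⊕ Fin n) K →ₐ[K] MvPolynomial (Fin n ⊕ Fin n) K :=
  aeval (Sum.elim (fun i => X (Sum.inl i))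
    (fun i => if (i : ℕ) < k then 0 else X (Sum.inr i)))

/-- (0-based indexing.) The ideal `(y₁,...,y_k)` is a minimal prime of
`I = (y₁, f_{12}, ..., f_{k-1,k})`. -/
theorem span_y_mem_minimalPrimes {K : Type*} [Field K] {n k : ℕ} (hk : 2 ≤ k) (hkn : k ≤ n) :
    Ideal.span {p : MvPolynomial (Fin n ⊕ Fin n) K | ∃ i : ℕ, ∃ h : i < k, p = yy ⟨i, by omega⟩}
      ∈ (Ideal.span ({yy (K := K) (n := n) ⟨0, by omega⟩} ∪
        {p | ∃ i : ℕ, ∃ h : i + 1 < k, p = fm ⟨i, by omega⟩ ⟨i + 1, by omega⟩})).minimalPrimes := by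
  set P := Ideal.span {p : MvPolynomial (Fin n ⊕ Fin n) K |
    ∃ i : ℕ, ∃ h : i < k, p = yy ⟨i, by omega⟩} with hP
  have hker : P = RingHom.ker (killY K n k).toRingHom := by
    apply le_antisymm
    · rw [hP, Ideal.span_le]
      rintro p ⟨i, h, rfl⟩
      simp [RingHom.mem_ker, killY, yy, h]
    · intro p hp
      have hp0 : killY K n k p = 0 := hp
      have key : ∀ q : MvPolynomial (Fin n ⊕ Fin n) K, q - killY K n k q ∈ P := by
        intro q
        induction q using MvPolynomial.induction_on with
        | C a => simp [killY]
        | add p q hp hq =>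
          rw [map_add, add_sub_add_comm]
          exact P.add_mem hp hq
        | mul_X p s hp =>
          have hs : X s - killY K n k (X s) ∈ P := by
            rcases s with i | i
            · simp [killY]
            · by_cases h : (i : ℕ) < k
              · have : (X (Sum.inr i) : MvPolynomial (Fin n ⊕ Fin n) K) ∈ P :=
                  Ideal.subset_span ⟨i, h, rfl⟩
                simpa [killY, h] using this
              · simp [killY, h]
          rw [map_mul]
          have e : p * X s - killY K n k p * killY K n k (X s)
              = X s * (p - killY K n k p) + killY K n k p * (X s - killY K n k (X s)) := by ring
          rw [e]
          exact P.add_mem (P.mul_mem_left _ hp) (P.mul_mem_left _ hs)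
      simpa [hp0] using key p
  have hprime : P.IsPrime := by
    rw [hker]
    exact RingHom.ker_isPrime _
  have hx : ∀ i : Fin n, (xx i : MvPolynomial (Fin n ⊕ Fin n) K) ∉ P := by
    intro i hi
    rw [hker] at hi
    have : killY K n k (xx i) = 0 := hi
    simp [killY, xx] at this
  have hy : ∀ (i : ℕ) (h : i < k), (yy ⟨i, by omega⟩ : MvPolynomial (Fin n ⊕ Fin n) K) ∈ P :=
    fun i h => Ideal.subset_span ⟨i, h, rfl⟩
  refine ⟨⟨hprime, ?_⟩, ?_⟩
  · rw [Ideal.span_le]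
    rintro p (hp | ⟨i, h, rfl⟩)
    · rw [Set.mem_singleton_iff] at hp
      subst hp
      exact hy 0 (by omega)
    · exact P.sub_mem (P.mul_mem_left _ (hy _ h)) (P.mul_mem_left _ (hy i (by omega)))
  · rintro Q ⟨hQ, hIQ⟩ hQP
    rw [Ideal.span_le] at hIQ
    have hyQ : ∀ (i : ℕ) (h : i < k),
        (yy ⟨i, by omega⟩ : MvPolynomial (Fin n ⊕ Fin n) K) ∈ Q := by
      intro i
      induction i with
      | zero => intro h; exact hIQ (Or.inl rfl)
      | succ i ih =>
        intro h
        have h1 : (fm ⟨i, by omega⟩ ⟨i + 1, by omega⟩ : MvPolynomial (Fin n ⊕ Fin n) K) ∈ Q :=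
          hIQ (Or.inr ⟨i, h, rfl⟩)
        have h2 := Q.add_mem h1 (Q.mul_mem_left (xx ⟨i + 1, by omega⟩) (ih (by omega)))
        rw [fm, sub_add_cancel] at h2
        exact (hQ.mem_or_mem h2).resolve_left fun h3 => hx _ (hQP h3)
    rw [hP, Ideal.span_le]
    rintro p ⟨i, h, rfl⟩
    exact hyQ i h
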